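/- Let d, k, n, L be positive integers with k ≥ 2, set n₁ = ⋯ = n_L = 2(k+1)n and B = (k/2 + 1)⁴. Then for every K of the form K = k^ℓ with 1 ≤ ℓ ≤ L, there exists a constant C, independent of n, such that sup_{f ∈ 𝒦₁(ℙ_K^d)} inf_{f_n ∈ Σ_{n_{1:L}}^k(B)} ‖f − f_n‖_{L²(𝔹ᵈ)} ≤ C ‖f‖_{𝒦₁(ℙ_K^d)} · n^{−1/2 − (2K+1)/(2d)}. In particular, a single deep ReLUᵏ network architecture of depth L and width 2(k+1)n simultaneously achieves this approximation rate for every variation space 𝒦₁(ℙ_{k^ℓ}^d), ℓ = 1, …, L. -/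

import Mathlib

/-!
The proof combines an approximation theorem for shallow `σ_K` networks, `K = k^ℓ`, with an exact
realization of such networks by deep `σ_k` networks.

*Shallow rate* (`exists_shallow_rate`).  Some coordinate of a unit vector is at least `1/d` in
absolute value, so after rescaling every dictionary element lies in one of `2d` charts in which one
weight is `±1` and the other weights together with the bias form a parameter `t ∈ [-d, d]ᵈ`
(`exists_chart`).  Divide the parameter cube into cells of side `1/M` and interpolate
`t ↦ σ_K(ω·x + b)` on each cell by tensor-product Lagrange polynomials of degree `K`.  Interpolation
is exact at every `x` for which the kink is not met on the cell, since `σ_K` is then a polynomial of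
degree `K` or zero; at the remaining `x`, which form a set of measure `O(1/M)`, all values are
`O(M^{-K})`.  Hence the residuals have `L²` norm `O(M^{-K-1/2})` (`eLpNorm_resid_le`).  All
interpolants lie in the span of `O(M^d)` fixed neurons, and Maurey's sampling argument applied to
the residuals (`exists_maurey_L2`) costs `n` more neurons and gains a factor `n^{-1/2}`.  With
`M ~ n^{1/d}` this is the rate of Siegel and Xu.

*Deep realization* (`exists_mem_deepClass`).  Since `x` is a linear combination of the powers
`(x + τ_j)^k` at `k + 1` distinct shifts, and `u^k = σ_k(u) + (-1)^k σ_k(-u)`, the input can be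
carried through a layer at a width depending only on `d` and `k`; splitting coefficients over several
copies of a neuron keeps all parameters bounded by one.  After `L - ℓ` such layers, `ℓ` layers turn
`ω·x + b` into `σ_{k^ℓ}(ω·x + b)` because `σ_k ∘ σ_{k^t} = σ_{k^{t+1}}`.  The weight bound
`(k/2 + 1)⁴ ≥ 1` therefore suffices.  Widths below the threshold occur only for boundedly many `n`,
for which the zero network is good enough.

*Closure.*  Elements of the variation ball are limits of finite combinations.  Since the target is
not assumed measurable, the limit uses a quasi-triangle inequality for the lower integral, in which
only one summand has to be measurable (`eLpNorm_add_le_two_mul`).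
-/

open MeasureTheory
open scoped Classical ENNReal

/-- The ReLU^k activation function: `σ_k(x) = x^k` for `x ≥ 0` and `0` for `x < 0`. -/
noncomputable def relupow (k : ℕ) (x : ℝ) : ℝ := if 0 ≤ x then x ^ k else 0

/-- Hidden layers of a fully-connected deep ReLU^k network of constant width `W` on `ℝᵈ`:
`deepLayers k d W A1 b1 A b m x = h_{m+1}(x)` where `h₁(x) = σ_k(A₁ x + b₁)` and
`h_{i+2}(x) = σ_k(A_{i+2} h_{i+1}(x) + b_{i+2})` (here `A i`, `b i` encode `A_{i+2}`, `b_{i+2}`). -/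
noncomputable def deepLayers (k d W : ℕ)
    (A1 : Matrix (Fin W) (Fin d) ℝ) (b1 : Fin W → ℝ)
    (A : ℕ → Matrix (Fin W) (Fin W) ℝ) (b : ℕ → Fin W → ℝ) :
    ℕ → (Fin d → ℝ) → (Fin W → ℝ)
  | 0, x, j => relupow k ((∑ i, A1 j i * x i) + b1 j)
  | m + 1, x, j =>
      relupow k ((∑ i, A m j i * deepLayers k d W A1 b1 A b m x i) + b m j)

/-- The class `Σ_{n_{1:L}}^k(B)` of deep ReLU^k networks of depth `L`, constant width `W`,
inner weights and biases bounded by `B`, and unconstrained output vector. -/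
def DeepReLUkClass (k d W L : ℕ) (B : ℝ) : Set ((Fin d → ℝ) → ℝ) :=
  {g | ∃ (A1 : Matrix (Fin W) (Fin d) ℝ) (b1 : Fin W → ℝ)
        (A : ℕ → Matrix (Fin W) (Fin W) ℝ) (b : ℕ → Fin W → ℝ) (c : Fin W → ℝ),
      (∀ i j, |A1 i j| ≤ B) ∧ (∀ i, |b1 i| ≤ B) ∧
      (∀ m, m < L - 1 → (∀ i j, |A m i j| ≤ B) ∧ (∀ i, |b m i| ≤ B)) ∧
      g = fun x => ∑ j, c j * deepLayers k d W A1 b1 A b (L - 1) x j}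

/-- The dictionary `ℙ_K^d = { x ↦ σ_K(ω·x + b) : ω ∈ 𝕊^{d−1}, b ∈ [−1,1] }`. -/
def dictP (d K : ℕ) : Set ((Fin d → ℝ) → ℝ) :=
  {g | ∃ (ω : Fin d → ℝ) (b : ℝ), (∑ i, (ω i) ^ 2 = 1) ∧ |b| ≤ 1 ∧
      g = fun x => relupow K ((∑ i, ω i * x i) + b)}

/-- `f` belongs to `R · cl(conv(±ℙ_K^d))`, the closure being taken in `L²(𝔹ᵈ)`:
`f` can be approximated arbitrarily well in `L²(𝔹ᵈ)` by finite linear combinations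
`Σ a_j h_j` of dictionary elements with `Σ |a_j| ≤ R`.  In particular
`‖f‖_{𝒦₁(ℙ_K^d)} ≤ R` in the variation space `𝒦₁(ℙ_K^d)`. -/
def memVariationBall (d K : ℕ) (R : ℝ) (f : (Fin d → ℝ) → ℝ) : Prop :=
  ∀ ε : ℝ, 0 < ε →
    ∃ (m : ℕ) (a : Fin m → ℝ) (h : Fin m → ((Fin d → ℝ) → ℝ)),
      (∀ j, h j ∈ dictP d K) ∧ (∑ j, |a j|) ≤ R ∧
      eLpNorm (f - fun x => ∑ j, a j * h j x) 2
          (volume.restrict {x : Fin d → ℝ | ∑ i, (x i) ^ 2 ≤ 1})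
        ≤ ENNReal.ofReal ε

/-! ### Deep networks reproduce shallow `σ_{k^ℓ}` networks -/

/-- `F` is the vector of outputs of the `(m+1)`-st hidden layer of a network of width `W` whose
weights and biases up to that layer are bounded by `B`. -/
def IsLayer (k d W : ℕ) (B : ℝ) (m : ℕ) (F : (Fin d → ℝ) → Fin W → ℝ) : Prop :=
  ∃ (A1 : Matrix (Fin W) (Fin d) ℝ) (b1 : Fin W → ℝ)
    (A : ℕ → Matrix (Fin W) (Fin W) ℝ) (b : ℕ → Fin W → ℝ),
    (∀ i j, |A1 i j| ≤ B) ∧ (∀ i, |b1 i| ≤ B) ∧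
    (∀ m' < m, (∀ i j, |A m' i j| ≤ B) ∧ (∀ i, |b m' i| ≤ B)) ∧
    F = deepLayers k d W A1 b1 A b m

theorem deepLayers_congr (k d W : ℕ) (A1 : Matrix (Fin W) (Fin d) ℝ) (b1 : Fin W → ℝ)
    (A A' : ℕ → Matrix (Fin W) (Fin W) ℝ) (b b' : ℕ → Fin W → ℝ) (m : ℕ)
    (hA : ∀ i < m, A i = A' i) (hb : ∀ i < m, b i = b' i) :
    deepLayers k d W A1 b1 A b m = deepLayers k d W A1 b1 A' b' m := by
  induction m with
  | zero => rfl
  | succ m ih =>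
    have h := ih (fun i hi => hA i (by omega)) (fun i hi => hb i (by omega))
    funext x j
    simp only [deepLayers]
    rw [h, hA m (by omega), hb m (by omega)]

theorem IsLayer.succ {k d W : ℕ} {B : ℝ} {m : ℕ} {F : (Fin d → ℝ) → Fin W → ℝ}
    (h : IsLayer k d W B m F) (A' : Matrix (Fin W) (Fin W) ℝ) (b' : Fin W → ℝ)
    (hA' : ∀ i j, |A' i j| ≤ B) (hb' : ∀ i, |b' i| ≤ B) :
    IsLayer k d W B (m + 1) (fun x j => relupow k ((∑ i, A' j i * F x i) + b' j)) := by
  obtain ⟨A1, b1, A, b, h1, h2, h3, rfl⟩ := h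
  refine ⟨A1, b1, Function.update A m A', Function.update b m b', h1, h2, ?_, ?_⟩
  · intro m' hm'
    rcases Nat.lt_succ_iff_lt_or_eq.mp hm' with h | rfl
    · rw [Function.update_of_ne h.ne, Function.update_of_ne h.ne]
      exact h3 m' h
    · simpa using ⟨hA', hb'⟩
  · funext x j
    simp only [deepLayers, Function.update_self]
    rw [deepLayers_congr k d W A1 b1 (Function.update A m A') A (Function.update b m b') b m
      (fun i hi => Function.update_of_ne hi.ne _ _)
      (fun i hi => Function.update_of_ne hi.ne _ _)]

theorem relupow_add_neg (k : ℕ) (hk : k ≠ 0) (u : ℝ) :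
    relupow k u + (-1) ^ k * relupow k (-u) = u ^ k := by
  unfold relupow
  rcases lt_trichotomy u 0 with h | h | h
  · rw [if_neg h.not_ge, if_pos (by linarith), ← mul_pow]
    simp
  · subst h
    simp [hk]
  · rw [if_pos h.le, if_neg (by linarith)]
    simp

theorem relupow_comp (k j : ℕ) (u : ℝ) :
    relupow k (relupow j u) = if 0 ≤ u then u ^ (j * k) else (0 : ℝ) ^ k := by
  unfold relupow
  by_cases h : 0 ≤ u
  · simp [h, pow_nonneg h, pow_mul]
  · simp [h]

/-- Equispaced interpolation nodes `q/(K+1)`, `q = 0, …, K`, in `[0, 1]`.  Any `K + 1` distinct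
points of `[0, 1]` would serve. -/
noncomputable def node (K : ℕ) (q : Fin (K + 1)) : ℝ := (q : ℝ) / (K + 1)

theorem node_injective (K : ℕ) : Function.Injective (node K) := by
  intro i j hij
  have : ((K : ℝ) + 1) ≠ 0 := by positivity
  simp only [node] at hij
  field_simp at hij
  exact Fin.ext (by exact_mod_cast hij)

theorem node_nonneg (K : ℕ) (q : Fin (K + 1)) : 0 ≤ node K q := by
  unfold node; positivity

theorem node_le_one (K : ℕ) (q : Fin (K + 1)) : node K q ≤ 1 := by
  unfold node
  rw [div_le_one (by positivity)]
  have := q.is_lt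
  exact_mod_cast this.le

/-- The identity is a linear combination of powers `(x + τ_j)^k`, `τ_j = j/(k+1)`: on polynomials
of degree at most `k`, the coefficient of `X^(k-1)` is a combination of point evaluations at the
nodes `τ_j`, and it equals `k x` for `(X + x)^k`. -/
theorem exists_identity_pow (k : ℕ) (hk : 1 ≤ k) :
    ∃ c : Fin (k + 1) → ℝ, ∀ x : ℝ,
      x = ∑ j, c j * (x + node k j) ^ k := by
  refine ⟨fun j => (Lagrange.basis Finset.univ (node k) j).coeff (k - 1) / k, fun x => ?_⟩
  have hkk : (k : ℝ) ≠ 0 := by positivity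
  have h := Lagrange.eq_interpolate (s := Finset.univ) (v := node k)
    (f := (Polynomial.X + Polynomial.C x) ^ k) (node_injective k).injOn (by
      rw [Polynomial.degree_pow, Polynomial.degree_X_add_C]
      simp
      exact_mod_cast Nat.lt_succ_self k)
  have h2 := congrArg (fun p => Polynomial.coeff p (k - 1)) h
  simp only [Polynomial.coeff_X_add_C_pow, Lagrange.interpolate_apply, Polynomial.finsetSum_coeff,
    Polynomial.coeff_C_mul, Polynomial.eval_pow, Polynomial.eval_add, Polynomial.eval_X,
    Polynomial.eval_C] at h2
  have h3 : k - (k - 1) = 1 := by omega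
  have h4 : k.choose (k - 1) = k := by
    rw [Nat.choose_symm_of_eq_add (b := 1) (by omega)]; simp
  rw [h3, h4, pow_one] at h2
  calc x = (x * k) / k := by field_simp
    _ = _ := by
      rw [h2, Finset.sum_div]
      refine Finset.sum_congr rfl fun j _ => ?_
      rw [add_comm x]
      ring

/-- The identity is a finite `σ_k` network with all parameters bounded by one.  Large output
coefficients are split over several copies of the same neuron. -/
theorem exists_identity_relupow (k : ℕ) (hk : 1 ≤ k) :
    ∃ (ι : Type) (_ : Fintype ι) (c s β : ι → ℝ),
      (∀ q, |c q| ≤ 1) ∧ (∀ q, |s q| ≤ 1) ∧ (∀ q, |β q| ≤ 1) ∧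
      ∀ x : ℝ, x = ∑ q, c q * relupow k (s q * x + β q) := by
  obtain ⟨c, hc⟩ := exists_identity_pow k hk
  obtain ⟨T, hT⟩ := exists_nat_ge (∑ j, |c j| + 1)
  have hcT : ∀ j, |c j| ≤ T := fun j => by
    have := Finset.single_le_sum (f := fun j => |c j|) (fun i _ => abs_nonneg _)
      (Finset.mem_univ j)
    linarith
  have hT0 : (0 : ℝ) < T := by
    have : (0 : ℝ) ≤ ∑ j, |c j| := Finset.sum_nonneg fun _ _ => abs_nonneg _
    linarith
  have hτ : ∀ j : Fin (k + 1), |node k j| ≤ 1 := fun j => by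
    rw [abs_of_nonneg (node_nonneg k j)]
    exact node_le_one k j
  refine ⟨Fin (k + 1) × Fin T × Bool, inferInstance,
    fun q => (if q.2.2 then 1 else (-1) ^ k) * (c q.1 / T),
    fun q => if q.2.2 then 1 else -1,
    fun q => if q.2.2 then node k q.1 else -node k q.1, ?_, ?_, ?_, ?_⟩
  · intro q
    rw [abs_mul, abs_div, abs_of_pos hT0]
    have h1 : |c q.1| / T ≤ 1 := by rw [div_le_one hT0]; exact hcT _
    split_ifs <;> simpa using h1
  · intro q
    dsimp only
    split_ifs <;> simp
  · intro q
    dsimp only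
    split_ifs
    · exact hτ _
    · rw [abs_neg]; exact hτ _
  · intro x
    conv_lhs => rw [hc x]
    simp only [Fintype.sum_prod_type, Fintype.sum_bool]
    refine Finset.sum_congr rfl fun j _ => ?_
    rw [← relupow_add_neg k (by omega)]
    simp only [if_true, Bool.false_eq_true, if_false, Finset.sum_const, Finset.card_univ,
      Fintype.card_fin, nsmul_eq_mul]
    rw [show -(x + node k j) = -1 * x + -node k j by ring, one_mul]
    field_simp

/-- Once the width exceeds a threshold depending on `d` and `k` only, neurons applied to arbitrary
bounded affine functions of the input are available in every hidden layer. -/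
theorem exists_isLayer_affine (k d : ℕ) (hk : 1 ≤ k) (B : ℝ) (hB : 1 ≤ B) :
    ∃ D0 : ℕ, ∀ W : ℕ, D0 ≤ W → ∀ (m : ℕ) (ω : Fin W → Fin d → ℝ) (b : Fin W → ℝ),
      (∀ j i, |ω j i| ≤ 1) → (∀ j, |b j| ≤ 1) →
      IsLayer k d W B m (fun x j => relupow k ((∑ i, ω j i * x i) + b j)) := by
  obtain ⟨ι, _, c, s, β, hc, hs, hβ, hid⟩ := exists_identity_relupow k hk
  refine ⟨Fintype.card (Fin d × ι), fun W hW m => ?_⟩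
  induction m with
  | zero =>
    intro ω b hω hb
    refine ⟨Matrix.of ω, b, 0, 0, fun i j => (hω i j).trans hB, fun i => (hb i).trans hB,
      fun m' hm' => absurd hm' (Nat.not_lt_zero _), ?_⟩
    funext x j
    simp [deepLayers]
  | succ m ih =>
    intro ω b hω hb
    obtain ⟨e⟩ : Nonempty (Fin d × ι ↪ Fin W) := by
      apply Function.Embedding.nonempty_of_card_le
      simpa using hW
    have hext : ∀ (f : Fin d × ι → ℝ), (∀ p, |f p| ≤ 1) →
        ∀ l, |Function.extend e f 0 l| ≤ 1 := by
      intro f hf l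
      by_cases hl : ∃ p, e p = l
      · obtain ⟨p, rfl⟩ := hl
        rw [e.injective.extend_apply]; exact hf p
      · rw [Function.extend_apply' _ _ _ hl]; simp
    have hpre := ih
      (fun l i => Function.extend e (fun p : Fin d × ι => if i = p.1 then s p.2 else 0) 0 l)
      (fun l => Function.extend e (fun p : Fin d × ι => β p.2) 0 l)
      (fun l i => hext _ (fun p => by split_ifs; exacts [hs _, by simp]) l)
      (fun l => hext _ (fun p => hβ _) l)
    have hnew := hpre.succ
      (Matrix.of fun j l => Function.extend e (fun p : Fin d × ι => ω j p.1 * c p.2) 0 l) b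
      (fun j l => (hext (fun p : Fin d × ι => ω j p.1 * c p.2) (fun p => by
        rw [abs_mul]; exact mul_le_one₀ (hω _ _) (abs_nonneg _) (hc _)) l).trans hB)
      (fun j => (hb j).trans hB)
    convert hnew using 4 with x j
    rw [← Fintype.sum_of_injective e e.injective
      (fun p : Fin d × ι => ω j p.1 * c p.2 * relupow k (s p.2 * x p.1 + β p.2))]
    · rw [Fintype.sum_prod_type]
      congr 1
      refine Finset.sum_congr rfl fun i _ => ?_
      conv_lhs => rw [hid (x i), Finset.mul_sum]
      exact Finset.sum_congr rfl fun q _ => by ring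
    · intro l hl
      have hl' : ¬ ∃ p, e p = l := by simpa using hl
      simp only [Matrix.of_apply]
      rw [Function.extend_apply' _ _ _ hl']
      simp
    · intro p
      simp only [Matrix.of_apply, e.injective.extend_apply]
      simp

/-- Since `σ_k ∘ σ_{k^t} = σ_{k^{t+1}}`, passing a neuron unchanged through further layers raises
its power. -/
theorem IsLayer.relupow_iterate {k d W : ℕ} (hk : 1 ≤ k) {B : ℝ} (hB : 1 ≤ B) {m : ℕ}
    {u : (Fin d → ℝ) → Fin W → ℝ}
    (h : IsLayer k d W B m (fun x j => relupow k (u x j))) (t : ℕ) :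
    IsLayer k d W B (m + t) (fun x j => relupow (k ^ (t + 1)) (u x j)) := by
  induction t with
  | zero => simpa using h
  | succ t ih =>
    have h1 := ih.succ 1 0 (fun i j => by
      rw [Matrix.one_apply]
      split_ifs
      · simpa using hB
      · simpa using zero_le_one.trans hB) (fun i => by simpa using zero_le_one.trans hB)
    rw [← add_assoc m t 1]
    convert h1 using 1
    funext x j
    simp only [Matrix.one_apply, ite_mul, one_mul, zero_mul, Finset.sum_ite_eq, Finset.mem_univ,
      if_true, Pi.zero_apply, add_zero]
    rw [relupow_comp, zero_pow (by omega), ← pow_succ]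
    rfl

/-- The neurons `x ↦ σ_K(ω·x + b)` with weights and bias bounded by one. -/
def neurons (d K : ℕ) : Set ((Fin d → ℝ) → ℝ) :=
  {g | ∃ (ω : Fin d → ℝ) (b : ℝ), (∀ i, |ω i| ≤ 1) ∧ |b| ≤ 1 ∧
    g = fun x => relupow K ((∑ i, ω i * x i) + b)}

/-- For all widths above a threshold, depth-`L` networks with the power `k` realize every linear
combination of at most `W` neurons with the power `k^ℓ`: the first `L - ℓ + 1` layers produce the
neurons with power `k`, and the remaining `ℓ - 1` raise it. -/
theorem exists_mem_deepClass (k d L ℓ : ℕ) (hk : 1 ≤ k) (hℓ1 : 1 ≤ ℓ) (hℓL : ℓ ≤ L)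
    (B : ℝ) (hB : 1 ≤ B) :
    ∃ D0 : ℕ, ∀ W : ℕ, D0 ≤ W → ∀ S : Finset ((Fin d → ℝ) → ℝ),
      (S : Set ((Fin d → ℝ) → ℝ)) ⊆ neurons d (k ^ ℓ) → S.card ≤ W →
      ∀ g ∈ Submodule.span ℝ (S : Set ((Fin d → ℝ) → ℝ)), g ∈ DeepReLUkClass k d W L B := by
  obtain ⟨D0, hD0⟩ := exists_isLayer_affine k d hk B hB
  refine ⟨D0, fun W hW S hS hcard g hg => ?_⟩
  obtain ⟨c, -, rfl⟩ := Submodule.mem_span_finset.mp hg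
  have hS' : ∀ p : S, ∃ (ω : Fin d → ℝ) (b : ℝ), (∀ i, |ω i| ≤ 1) ∧ |b| ≤ 1 ∧
    (p : (Fin d → ℝ) → ℝ) = fun x => relupow (k ^ ℓ) ((∑ i, ω i * x i) + b) := fun p => hS p.2
  choose ω b hω hb hp using hS'
  obtain ⟨e⟩ : Nonempty (S ↪ Fin W) := by
    apply Function.Embedding.nonempty_of_card_le
    simpa using hcard
  have hext : ∀ (f : S → ℝ), (∀ p, |f p| ≤ 1) → ∀ l, |Function.extend e f 0 l| ≤ 1 := by
    intro f hf l
    by_cases hl : ∃ p, e p = l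
    · obtain ⟨p, rfl⟩ := hl
      rw [e.injective.extend_apply]; exact hf p
    · rw [Function.extend_apply' _ _ _ hl]; simp
  have h1 := (hD0 W hW (L - ℓ) (fun l i => Function.extend e (fun p => ω p i) 0 l)
    (fun l => Function.extend e b 0 l) (fun l i => hext _ (fun p => hω p i) l)
    (fun l => hext _ hb l)).relupow_iterate hk hB (ℓ - 1)
  rw [show L - ℓ + (ℓ - 1) = L - 1 by omega, show ℓ - 1 + 1 = ℓ by omega] at h1
  obtain ⟨A1, b1, A, b', hA1, hb1, hA, hF⟩ := h1
  refine ⟨A1, b1, A, b', fun l => Function.extend e (fun p => c p) 0 l, hA1, hb1, hA, ?_⟩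
  funext x
  rw [← hF, Finset.sum_apply, ← Finset.sum_coe_sort]
  apply Fintype.sum_of_injective e e.injective
  · intro l hl
    have hl' : ¬ ∃ p, e p = l := by simpa using hl
    simp only [Function.extend_apply' _ _ _ hl']
    simp
  · intro p
    simp only [e.injective.extend_apply]
    rw [Pi.smul_apply, smul_eq_mul]
    congr 1
    conv_lhs => rw [hp p]

theorem zero_mem_deepClass (k d W L : ℕ) (B : ℝ) (hB : 0 ≤ B) :
    (0 : (Fin d → ℝ) → ℝ) ∈ DeepReLUkClass k d W L B := by
  refine ⟨0, 0, 0, 0, 0, ?_, ?_, ?_, ?_⟩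
  · simpa using fun _ _ => hB
  · simpa using fun _ => hB
  · intro m _
    exact ⟨by simpa using fun _ _ => hB, by simpa using fun _ => hB⟩
  · funext x; simp

/-! ### Tensor-product Lagrange interpolation on the unit cube -/

/-- The tensor-product Lagrange basis polynomial of the node `(node K (ν j))_j`, evaluated
at `s`. -/
noncomputable def lagr (d K : ℕ) (ν : Fin d → Fin (K + 1)) (s : Fin d → ℝ) : ℝ :=
  ∏ j, (Lagrange.basis Finset.univ (node K) (ν j)).eval (s j)

theorem pow_eq_sum_lagrange (K e : ℕ) (he : e ≤ K) (u : ℝ) :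
    u ^ e = ∑ q, node K q ^ e * (Lagrange.basis Finset.univ (node K) q).eval u := by
  have h := Lagrange.eq_interpolate (s := Finset.univ) (v := node K)
    (f := (Polynomial.X : Polynomial ℝ) ^ e) (node_injective K).injOn (by
      rw [Polynomial.degree_X_pow]
      simp only [Finset.card_univ, Fintype.card_fin]
      exact_mod_cast Nat.lt_succ_of_le he)
  have h2 := congrArg (Polynomial.eval u) h
  simpa [Lagrange.interpolate_apply, Polynomial.eval_finsetSum] using h2

theorem eval_eq_sum_lagr {d K : ℕ} (P : MvPolynomial (Fin d) ℝ) (hP : P.totalDegree ≤ K)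
    (s : Fin d → ℝ) :
    MvPolynomial.eval s P = ∑ ν, lagr d K ν s * MvPolynomial.eval (fun j => node K (ν j)) P := by
  simp only [MvPolynomial.eval_eq', Finset.mul_sum]
  rw [Finset.sum_comm]
  refine Finset.sum_congr rfl fun m hm => ?_
  have hmj : ∀ j, m j ≤ K := by
    intro j
    refine le_trans ?_ ((MvPolynomial.le_totalDegree hm).trans hP)
    rw [Finsupp.sum_fintype _ _ (fun _ => rfl)]
    exact Finset.single_le_sum (f := fun i => m i) (fun _ _ => Nat.zero_le _) (Finset.mem_univ j)
  have h1 : ∏ j, s j ^ m j = ∑ ν : Fin d → Fin (K + 1),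
      ∏ j, (node K (ν j) ^ m j * (Lagrange.basis Finset.univ (node K) (ν j)).eval (s j)) := by
    rw [← Fintype.piFinset_univ, ← Finset.prod_univ_sum (fun _ => Finset.univ)
      (fun j q => node K q ^ m j * (Lagrange.basis Finset.univ (node K) q).eval (s j))]
    exact Finset.prod_congr rfl fun j _ => pow_eq_sum_lagrange K (m j) (hmj j) (s j)
  rw [h1, Finset.mul_sum]
  refine Finset.sum_congr rfl fun ν _ => ?_
  rw [Finset.prod_mul_distrib, lagr]
  ring

/-- The `K`-th power of an affine function is interpolated exactly. -/
theorem affine_pow_eq_sum_lagr {d : ℕ} (K : ℕ) (c : ℝ) (y s : Fin d → ℝ) :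
    (c + ∑ j, y j * s j) ^ K = ∑ ν, lagr d K ν s * (c + ∑ j, y j * node K (ν j)) ^ K := by
  have h := eval_eq_sum_lagr (K := K)
    ((MvPolynomial.C c + ∑ j, MvPolynomial.C (y j) * MvPolynomial.X j) ^ K) (by
      refine (MvPolynomial.totalDegree_pow _ _).trans ?_
      refine (Nat.mul_le_mul_left K (m := 1) ?_).trans (by simp)
      refine (MvPolynomial.totalDegree_add _ _).trans (max_le (by simp) ?_)
      refine MvPolynomial.totalDegree_finsetSum_le fun j _ => ?_
      refine (MvPolynomial.totalDegree_mul _ _).trans ?_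
      simp) s
  simpa using h

/-- The Lebesgue constant of the interpolation on the cube is finite. -/
theorem exists_lebesgue_bound (d K : ℕ) :
    ∃ Λ : ℝ, 0 ≤ Λ ∧ ∀ s ∈ Set.Icc (0 : Fin d → ℝ) 1, ∑ ν, |lagr d K ν s| ≤ Λ := by
  have hc : Continuous fun s : Fin d → ℝ => ∑ ν, |lagr d K ν s| := by
    unfold lagr
    refine continuous_finsetSum _ fun ν _ => (continuous_finsetProd _ fun j _ => ?_).abs
    exact (Polynomial.continuous _).comp (continuous_apply j)
  obtain ⟨Λ, hΛ⟩ := (isCompact_Icc (a := (0 : Fin d → ℝ)) (b := 1)).exists_bound_of_continuousOn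
    hc.continuousOn
  refine ⟨max Λ 0, le_max_right _ _, fun s hs => ?_⟩
  exact (le_abs_self _).trans ((hΛ s hs).trans (le_max_left _ _))

theorem abs_relupow_le (K : ℕ) {u v : ℝ} (h : |u| ≤ v) : |relupow K u| ≤ v ^ K := by
  unfold relupow
  split_ifs
  · rw [abs_pow]; exact pow_le_pow_left₀ (abs_nonneg _) h _
  · simpa using pow_nonneg ((abs_nonneg u).trans h) K

/-- Interpolation error of `σ_K` of an affine function of the cube with total variation at most
`δ`: it vanishes unless the kink is within reach, in which case all values are `O(δ^K)`. -/
theorem relupow_interp_error {d K : ℕ} {Λ δ : ℝ}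
    (hΛ : ∀ s ∈ Set.Icc (0 : Fin d → ℝ) 1, ∑ ν, |lagr d K ν s| ≤ Λ)
    (c : ℝ) (y s : Fin d → ℝ) (hy : ∑ j, |y j| ≤ δ) (hs : s ∈ Set.Icc (0 : Fin d → ℝ) 1) :
    (δ < |c + ∑ j, y j * s j| →
      relupow K (c + ∑ j, y j * s j)
        - ∑ ν, lagr d K ν s * relupow K (c + ∑ j, y j * node K (ν j)) = 0) ∧
    (|c + ∑ j, y j * s j| ≤ δ →
      |relupow K (c + ∑ j, y j * s j)
        - ∑ ν, lagr d K ν s * relupow K (c + ∑ j, y j * node K (ν j))|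
          ≤ (1 + Λ) * (2 * δ) ^ K) := by
  have hdiff : ∀ ν : Fin d → Fin (K + 1),
      |(c + ∑ j, y j * node K (ν j)) - (c + ∑ j, y j * s j)| ≤ δ := by
    intro ν
    rw [add_sub_add_left_eq_sub, ← Finset.sum_sub_distrib]
    refine (Finset.abs_sum_le_sum_abs _ _).trans (le_trans (Finset.sum_le_sum fun j _ => ?_) hy)
    rw [← mul_sub, abs_mul]
    refine mul_le_of_le_one_right (abs_nonneg _) ?_
    have h1 := node_nonneg K (ν j)
    have h2 := node_le_one K (ν j)
    have h3 := hs.1 j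
    have h4 := hs.2 j
    simp only [Pi.zero_apply, Pi.one_apply] at h3 h4
    rw [abs_le]
    constructor <;> linarith
  have hδ : 0 ≤ δ := le_trans (Finset.sum_nonneg fun _ _ => abs_nonneg _) hy
  constructor
  · intro h
    rcases lt_abs.mp h with h | h
    · have hν : ∀ ν : Fin d → Fin (K + 1), 0 ≤ c + ∑ j, y j * node K (ν j) := by
        intro ν
        have := (abs_le.mp (hdiff ν)).1
        linarith
      have h0 : 0 ≤ c + ∑ j, y j * s j := by linarith
      simp only [relupow, hν, h0, if_true]
      rw [← affine_pow_eq_sum_lagr, sub_self]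
    · have hν : ∀ ν : Fin d → Fin (K + 1), ¬ 0 ≤ c + ∑ j, y j * node K (ν j) := by
        intro ν
        have := (abs_le.mp (hdiff ν)).2
        linarith
      have h0 : ¬ 0 ≤ c + ∑ j, y j * s j := by linarith
      simp [relupow, hν, h0]
  · intro h
    refine (abs_sub _ _).trans ?_
    rw [add_mul, one_mul]
    refine add_le_add (abs_relupow_le K (by linarith)) ?_
    refine (Finset.abs_sum_le_sum_abs _ _).trans ?_
    refine le_trans ?_ (mul_le_mul_of_nonneg_right (hΛ s hs) (by positivity))
    rw [Finset.sum_mul]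
    refine Finset.sum_le_sum fun ν _ => ?_
    rw [abs_mul]
    refine mul_le_mul_of_nonneg_left (abs_relupow_le K ?_) (abs_nonneg _)
    have := abs_sub_abs_le_abs_sub (c + ∑ j, y j * node K (ν j)) (c + ∑ j, y j * s j)
    linarith [hdiff ν]

/-! ### Charts of the dictionary and the kink estimate in `L²` -/

/-- Lebesgue measure on the closed Euclidean unit ball of `ℝᵈ`. -/
noncomputable abbrev ballMeasure (d : ℕ) : Measure (Fin d → ℝ) :=
  volume.restrict {x : Fin d → ℝ | ∑ i, (x i) ^ 2 ≤ 1}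

theorem measurableSet_euclBall (d : ℕ) : MeasurableSet {x : Fin d → ℝ | ∑ i, (x i) ^ 2 ≤ 1} :=
  measurableSet_le (by fun_prop) measurable_const

theorem abs_le_one_of_mem_ball {d : ℕ} {x : Fin d → ℝ} (hx : ∑ i, (x i) ^ 2 ≤ 1) (i : Fin d) :
    |x i| ≤ 1 := by
  have h := Finset.single_le_sum (f := fun i => (x i) ^ 2) (fun i _ => sq_nonneg _)
    (Finset.mem_univ i)
  exact abs_le_one_iff_mul_self_le_one.mpr (by nlinarith)

instance (d : ℕ) : IsFiniteMeasure (ballMeasure d) := by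
  refine ⟨?_⟩
  rw [Measure.restrict_apply_univ]
  refine lt_of_le_of_lt (measure_mono (t := Set.Icc (-1) 1) fun x hx => ?_)
    isCompact_Icc.measure_lt_top
  exact ⟨fun i => (abs_le.mp (abs_le_one_of_mem_ball hx i)).1,
    fun i => (abs_le.mp (abs_le_one_of_mem_ball hx i)).2⟩

/-- The sign `±1` of a chart. -/
def chartSign (b : Bool) : ℝ := if b then 1 else -1

theorem abs_chartSign (b : Bool) : |chartSign b| = 1 := by
  cases b <;> simp [chartSign]

/-- Affine functions `ω·x + b` with `ω_i = ±1` for a fixed coordinate `i`.  The chart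
`p = (i, sign)` is parametrized by `t ∈ ℝᵈ`: the entries `t_j`, `j ≠ i`, are the remaining entries
of `ω`, and `t_i` is the bias. -/
def chartAffine {d : ℕ} (p : Fin d × Bool) (t x : Fin d → ℝ) : ℝ :=
  chartSign p.2 * x p.1 + ∑ j, t j * Function.update x p.1 1 j

theorem chartAffine_eq {d : ℕ} (p : Fin d × Bool) (t x : Fin d → ℝ) :
    chartAffine p t x = (∑ j, (if j = p.1 then chartSign p.2 else t j) * x j) + t p.1 := by
  have h : ∑ j, (t j * Function.update x p.1 1 j
      - (if j = p.1 then chartSign p.2 else t j) * x j)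
      = ∑ j, if j = p.1 then t p.1 - chartSign p.2 * x p.1 else 0 := by
    refine Finset.sum_congr rfl fun j _ => ?_
    by_cases hj : j = p.1
    · subst hj; simp
    · simp [hj]
  rw [Finset.sum_sub_distrib, Finset.sum_ite_eq' Finset.univ p.1] at h
  simp only [Finset.mem_univ, if_true] at h
  unfold chartAffine
  linarith

/-- In a chart the hyperplane neighbourhood `|ω·x + b| ≤ δ` has volume `O(δ)` in the ball,
uniformly in the parameter: a shear of determinant `±1` maps it into a box. -/
theorem ballMeasure_slab_le {d : ℕ} (p : Fin d × Bool) (t : Fin d → ℝ) {δ : ℝ} (hδ : 0 ≤ δ) :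
    ballMeasure d {x | |chartAffine p t x| ≤ δ} ≤ ENNReal.ofReal (2 ^ d * δ) := by
  let v : Fin d → ℝ := fun j => if j = p.1 then chartSign p.2 else t j
  let M : Matrix (Fin d) (Fin d) ℝ := Matrix.updateRow 1 p.1 v
  have hdet : M.det = chartSign p.2 := by
    have h := Matrix.cramer_transpose_apply (1 : Matrix (Fin d) (Fin d) ℝ) v p.1
    rw [Matrix.transpose_one, Matrix.cramer_one] at h
    simp only [M]
    rw [← h]
    simp [v]
  have hdet' : LinearMap.det (Matrix.toLin' M) = chartSign p.2 := by
    rw [LinearMap.det_toLin', hdet]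
  have hne : LinearMap.det (Matrix.toLin' M) ≠ 0 := by
    rw [hdet']
    intro h
    have := abs_chartSign p.2
    rw [h] at this
    simp at this
  let lo : Fin d → ℝ := fun j => if j = p.1 then -δ - t p.1 else -1
  let hi : Fin d → ℝ := fun j => if j = p.1 then δ - t p.1 else 1
  rw [Measure.restrict_apply' (measurableSet_euclBall d)]
  have hsub : {x | |chartAffine p t x| ≤ δ} ∩ {x : Fin d → ℝ | ∑ i, (x i) ^ 2 ≤ 1}
      ⊆ (Matrix.toLin' M) ⁻¹' Set.Icc lo hi := by
    rintro x ⟨hx1, hx2⟩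
    have hx1' : |chartAffine p t x| ≤ δ := hx1
    rw [chartAffine_eq, abs_le] at hx1'
    have key : ∀ j, lo j ≤ Matrix.toLin' M x j ∧ Matrix.toLin' M x j ≤ hi j := by
      intro j
      by_cases hj : j = p.1
      · have : Matrix.toLin' M x j = ∑ l, v l * x l := by
          simp [M, hj, Matrix.mulVec, dotProduct]
        rw [this]
        simp only [lo, hi, hj, if_true, v]
        constructor <;> linarith [hx1'.1, hx1'.2]
      · have : Matrix.toLin' M x j = x j := by
          simp [M, hj, Matrix.mulVec, dotProduct, Matrix.one_apply]
        rw [this]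
        simp only [lo, hi, hj, if_false]
        exact abs_le.mp (abs_le_one_of_mem_ball hx2 j)
    exact ⟨fun j => (key j).1, fun j => (key j).2⟩
  refine (measure_mono hsub).trans ?_
  rw [Measure.addHaar_preimage_linearMap _ hne, hdet', abs_inv, abs_chartSign, inv_one,
    ENNReal.ofReal_one, one_mul, Real.volume_Icc_pi]
  rw [← ENNReal.ofReal_prod_of_nonneg]
  · apply ENNReal.ofReal_le_ofReal
    apply le_of_eq
    have : ∀ j, hi j - lo j = 2 * (if j = p.1 then δ else 1) := by
      intro j
      simp only [hi, lo]
      split_ifs <;> ring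
    simp only [this, Finset.prod_mul_distrib, Finset.prod_const, Finset.card_univ,
      Fintype.card_fin, Finset.prod_ite_eq', Finset.mem_univ, if_true]
  · intro j _
    simp only [hi, lo]
    split_ifs <;> linarith

theorem eLpNorm_le_of_slab {d : ℕ} (p : Fin d × Bool) (t : Fin d → ℝ) {δ G : ℝ} (hδ : 0 ≤ δ)
    (hG : 0 ≤ G) (r : (Fin d → ℝ) → ℝ)
    (h0 : ∀ x : Fin d → ℝ, ∑ i, (x i) ^ 2 ≤ 1 → δ < |chartAffine p t x| → r x = 0)
    (h1 : ∀ x : Fin d → ℝ, ∑ i, (x i) ^ 2 ≤ 1 → |chartAffine p t x| ≤ δ → |r x| ≤ G) :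
    eLpNorm r 2 (ballMeasure d) ≤ ENNReal.ofReal (G * √(2 ^ d * δ)) := by
  have hmeas : MeasurableSet {x : Fin d → ℝ | |chartAffine p t x| ≤ δ} := by
    simp only [chartAffine_eq]
    exact measurableSet_le (by fun_prop) measurable_const
  have hle : eLpNorm r 2 (ballMeasure d) ≤
      eLpNorm (Set.indicator {x | |chartAffine p t x| ≤ δ} fun _ => G) 2 (ballMeasure d) := by
    apply eLpNorm_mono_ae
    refine ae_restrict_of_forall_mem (measurableSet_euclBall d) fun x hx => ?_
    by_cases hxs : |chartAffine p t x| ≤ δ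
    · rw [Set.indicator_of_mem (by exact hxs), Real.norm_eq_abs, Real.norm_eq_abs, abs_of_nonneg hG]
      exact h1 x hx hxs
    · rw [h0 x hx (not_le.mp hxs)]
      simp
  refine hle.trans ?_
  rw [eLpNorm_indicator_const hmeas (by norm_num) (by norm_num), ENNReal.ofReal_mul hG,
    Real.sqrt_eq_rpow, ← ENNReal.ofReal_rpow_of_nonneg (by positivity) (by norm_num),
    Real.enorm_eq_ofReal hG]
  gcongr
  simp only [ENNReal.toReal_ofNat]
  gcongr
  exact ballMeasure_slab_le p t hδ

theorem measurable_relupow (K : ℕ) : Measurable (relupow K) :=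
  Measurable.ite measurableSet_Ici (by fun_prop) measurable_const

/-- The ridge function `σ_K(ω·x + b)` with parameter `t` in the chart `p`. -/
noncomputable def ridge {d : ℕ} (K : ℕ) (p : Fin d × Bool) (t x : Fin d → ℝ) : ℝ :=
  relupow K (chartAffine p t x)

theorem measurable_ridge {d : ℕ} (K : ℕ) (p : Fin d × Bool) (t : Fin d → ℝ) :
    Measurable (ridge K p t) := by
  refine (measurable_relupow K).comp ?_
  have : chartAffine p t = fun x => _ := funext fun x => chartAffine_eq p t x
  rw [this]
  fun_prop

/-- The interpolation nodes of the cell `M⁻¹(z + [0,1]ᵈ)` of the parameter grid. -/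
noncomputable def cellNode {d : ℕ} (K M : ℕ) (z : Fin d → ℤ) (ν : Fin d → Fin (K + 1)) :
    Fin d → ℝ :=
  fun j => (z j + node K (ν j)) / M

/-- The error of interpolating the map `t ↦ ridge K p t` within the grid cell containing `t`. -/
noncomputable def resid {d : ℕ} (K M : ℕ) (p : Fin d × Bool) (t x : Fin d → ℝ) : ℝ :=
  ridge K p t x - ∑ ν, lagr d K ν (fun j => Int.fract (M * t j)) *
    ridge K p (cellNode K M (fun j => ⌊M * t j⌋) ν) x

theorem measurable_resid {d : ℕ} (K M : ℕ) (p : Fin d × Bool) (t : Fin d → ℝ) :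
    Measurable (resid K M p t) := by
  have h := fun t => measurable_ridge K p t
  unfold resid
  exact (h t).sub (Finset.measurable_fun_sum _ fun ν _ => (h _).const_mul _)

/-- The parametrization of the dictionary by `t` has smoothness `K + 1/2` in `L²`: interpolation
on cells of side `1/M` has error `O(M^{-(K+1/2)})`. -/
theorem eLpNorm_resid_le {d K : ℕ} {Λ : ℝ} (hΛ0 : 0 ≤ Λ)
    (hΛ : ∀ s ∈ Set.Icc (0 : Fin d → ℝ) 1, ∑ ν, |lagr d K ν s| ≤ Λ)
    {M : ℕ} (hM : 0 < M) (p : Fin d × Bool) (t : Fin d → ℝ) :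
    eLpNorm (resid K M p t) 2 (ballMeasure d) ≤
      ENNReal.ofReal ((1 + Λ) * (2 * (d / M)) ^ K * √(2 ^ d * (d / M))) := by
  have hM' : (0 : ℝ) < M := by exact_mod_cast hM
  have key : ∀ x : Fin d → ℝ, ∑ i, (x i) ^ 2 ≤ 1 →
      (d / M < |chartAffine p t x| → resid K M p t x = 0) ∧
      (|chartAffine p t x| ≤ d / M → |resid K M p t x| ≤ (1 + Λ) * (2 * (d / M)) ^ K) := by
    intro x hx
    have h := relupow_interp_error hΛ (δ := d / M)
      (chartSign p.2 * x p.1 + ∑ j, (⌊M * t j⌋ : ℝ) / M * Function.update x p.1 1 j)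
      (fun j => Function.update x p.1 1 j / M) (fun j => Int.fract (M * t j)) (by
        calc ∑ j, |Function.update x p.1 1 j / M| ≤ ∑ j : Fin d, (1 : ℝ) / M := by
              refine Finset.sum_le_sum fun j _ => ?_
              rw [abs_div, abs_of_pos hM']
              gcongr
              by_cases hj : j = p.1
              · subst hj; simp
              · rw [Function.update_of_ne hj]; exact abs_le_one_of_mem_ball hx j
          _ = d / M := by simp [div_eq_mul_inv])
      ⟨fun j => Int.fract_nonneg _, fun j => (Int.fract_lt_one _).le⟩
    have e1 : chartSign p.2 * x p.1 + ∑ j, (⌊M * t j⌋ : ℝ) / M * Function.update x p.1 1 j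
        + ∑ j, Function.update x p.1 1 j / M * Int.fract (M * t j) = chartAffine p t x := by
      unfold chartAffine
      rw [add_assoc, ← Finset.sum_add_distrib]
      congr 1
      refine Finset.sum_congr rfl fun j _ => ?_
      rw [← Int.self_sub_floor]
      field_simp
      ring
    have e2 : ∀ ν : Fin d → Fin (K + 1),
        chartSign p.2 * x p.1 + ∑ j, (⌊M * t j⌋ : ℝ) / M * Function.update x p.1 1 j
        + ∑ j, Function.update x p.1 1 j / M * node K (ν j)
        = chartAffine p (cellNode K M (fun j => ⌊M * t j⌋) ν) x := by
      intro ν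
      unfold chartAffine
      rw [add_assoc, ← Finset.sum_add_distrib]
      congr 1
      refine Finset.sum_congr rfl fun j _ => ?_
      unfold cellNode
      ring
    simp only [e1, e2] at h
    exact h
  exact eLpNorm_le_of_slab p t (by positivity) (by positivity) _
    (fun x hx => (key x hx).1) (fun x hx => (key x hx).2)

/-! ### Maurey's sampling argument -/

/-- Derandomized sampling: choosing the next element so that the squared norm does not exceed its
average keeps the sum of `n` centred elements at squared norm at most `n ρ²`. -/
theorem exists_sampling {H : Type*} [NormedAddCommGroup H] [InnerProductSpace ℝ H] {m : ℕ}
    (v : Fin m → H) (p : Fin m → ℝ) (hp : ∀ j, 0 ≤ p j) (hp1 : ∑ j, p j = 1) {ρ : ℝ}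
    (hv : ∀ j, ‖v j‖ ≤ ρ) (n : ℕ) :
    ∃ idx : Fin n → Fin m, ‖∑ i, (v (idx i) - ∑ j, p j • v j)‖ ^ 2 ≤ n * ρ ^ 2 := by
  set u := ∑ j, p j • v j with hu
  induction n with
  | zero => exact ⟨Fin.elim0, by simp⟩
  | succ n ih =>
    obtain ⟨idx, hidx⟩ := ih
    set S := ∑ i, (v (idx i) - u) with hS
    have hcent : ∑ j, p j • (v j - u) = 0 := by
      simp only [smul_sub, Finset.sum_sub_distrib, ← Finset.sum_smul, hp1, one_smul]
      rw [← hu, sub_self]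
    have hvar : ∑ j, p j * ‖v j - u‖ ^ 2 ≤ ρ ^ 2 := by
      have h1 : ∀ j, p j * ‖v j - u‖ ^ 2
          = p j * ‖v j‖ ^ 2 - 2 * inner ℝ (p j • v j) u + p j * ‖u‖ ^ 2 := by
        intro j
        rw [norm_sub_sq_real, real_inner_smul_left]
        ring
      simp only [h1, Finset.sum_add_distrib, Finset.sum_sub_distrib, ← Finset.mul_sum,
        ← Finset.sum_mul, hp1, ← sum_inner]
      rw [← hu, real_inner_self_eq_norm_sq]
      have h2 : ∑ j, p j * ‖v j‖ ^ 2 ≤ ∑ j, p j * ρ ^ 2 :=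
        Finset.sum_le_sum fun j _ =>
          mul_le_mul_of_nonneg_left (pow_le_pow_left₀ (norm_nonneg _) (hv j) 2) (hp j)
      rw [← Finset.sum_mul, hp1, one_mul] at h2
      nlinarith [sq_nonneg ‖u‖]
    have havg : ∑ j, p j * ‖S + (v j - u)‖ ^ 2 ≤ ∑ j, p j * ((n + 1) * ρ ^ 2) := by
      have h1 : ∀ j, p j * ‖S + (v j - u)‖ ^ 2
          = p j * ‖S‖ ^ 2 + 2 * inner ℝ S (p j • (v j - u)) + p j * ‖v j - u‖ ^ 2 := by
        intro j
        rw [norm_add_sq_real, real_inner_smul_right]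
        ring
      simp only [h1, Finset.sum_add_distrib, ← Finset.mul_sum, ← Finset.sum_mul, hp1, ← inner_sum,
        hcent, inner_zero_right]
      linarith
    have hne : (Finset.univ : Finset (Fin m)).Nonempty := by
      by_contra h
      rw [Finset.not_nonempty_iff_eq_empty] at h
      rw [h] at hp1
      simp at hp1
    obtain ⟨j, hj⟩ : ∃ j, ‖S + (v j - u)‖ ^ 2 ≤ (n + 1) * ρ ^ 2 := by
      by_contra hcon
      push Not at hcon
      have hle : ∀ j, p j * ((n + 1) * ρ ^ 2) ≤ p j * ‖S + (v j - u)‖ ^ 2 := fun j =>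
        mul_le_mul_of_nonneg_left (hcon j).le (hp j)
      have heq := (Finset.sum_eq_sum_iff_of_le fun j _ => hle j).mp
        (le_antisymm (Finset.sum_le_sum fun j _ => hle j) havg)
      have hz : ∀ j, p j = 0 := by
        intro j
        by_contra hpj
        exact absurd (mul_left_cancel₀ hpj (heq j (Finset.mem_univ j))) (hcon j).ne
      simp [hz] at hp1
    refine ⟨Fin.snoc idx j, ?_⟩
    rw [Fin.sum_univ_castSucc]
    simp only [Fin.snoc_castSucc, Fin.snoc_last]
    push_cast
    exact hj

/-- Maurey's lemma: `n` sampled elements approximate a combination with error `n^{-1/2}`, weights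
being the normalized `|a j|` and the signs absorbed into the elements. -/
theorem exists_maurey {H : Type*} [NormedAddCommGroup H] [InnerProductSpace ℝ H] {m : ℕ}
    (v : Fin m → H) (a : Fin m → ℝ) {ρ : ℝ} (hv : ∀ j, ‖v j‖ ≤ ρ) {n : ℕ} (hn : 0 < n) :
    ∃ n' ≤ n, ∃ (idx : Fin n' → Fin m) (c : Fin n' → ℝ),
      ‖∑ j, a j • v j - ∑ i, c i • v (idx i)‖ ≤ (∑ j, |a j|) * ρ / √n := by
  rcases (Finset.sum_nonneg fun j (_ : j ∈ Finset.univ) => abs_nonneg (a j)).eq_or_lt with hA | hA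
  · refine ⟨0, Nat.zero_le _, Fin.elim0, Fin.elim0, ?_⟩
    have h0 : ∀ j, a j = 0 := fun j => by
      have := (Finset.sum_eq_zero_iff_of_nonneg (fun j _ => abs_nonneg (a j))).mp hA.symm j
        (Finset.mem_univ j)
      exact abs_eq_zero.mp this
    simp [h0]
  · set A := ∑ j, |a j| with hAdef
    have hn' : (0 : ℝ) < n := by exact_mod_cast hn
    obtain ⟨idx, hidx⟩ := exists_sampling (fun j => (SignType.sign (a j) : ℝ) • v j)
      (fun j => |a j| / A) (fun j => by positivity) (by
        rw [← Finset.sum_div, ← hAdef, div_self hA.ne']) (ρ := ρ) (fun j => by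
          rw [norm_smul]
          refine le_trans (mul_le_of_le_one_left (norm_nonneg _) ?_) (hv j)
          rcases SignType.sign (a j) with _ | _ | _ <;> simp) n
    refine ⟨n, le_rfl, idx, fun i => A / n * (SignType.sign (a (idx i)) : ℝ), ?_⟩
    have hρ : 0 ≤ ρ := by
      have : 0 < m := by
        by_contra hm
        have : m = 0 := by omega
        subst this
        simp [hAdef] at hA
      exact (norm_nonneg _).trans (hv ⟨0, this⟩)
    have hu : ∑ j, (|a j| / A) • (SignType.sign (a j) : ℝ) • v j = A⁻¹ • ∑ j, a j • v j := by
      rw [Finset.smul_sum]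
      refine Finset.sum_congr rfl fun j _ => ?_
      rw [smul_smul, smul_smul]
      congr 1
      rw [div_mul_eq_mul_div, abs_mul_sign]
      ring
    rw [hu] at hidx
    have hrew : ∑ j, a j • v j - ∑ i, (A / n * (SignType.sign (a (idx i)) : ℝ)) • v (idx i)
        = -((A / n) • ∑ i, ((SignType.sign (a (idx i)) : ℝ) • v (idx i)
            - A⁻¹ • ∑ j, a j • v j)) := by
      rw [Finset.sum_sub_distrib, Finset.sum_const, Finset.card_univ, Fintype.card_fin,
        ← Nat.cast_smul_eq_nsmul ℝ, smul_sub, smul_smul, smul_smul, Finset.smul_sum]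
      rw [show A / n * n * A⁻¹ = 1 by field_simp]
      simp only [smul_smul, one_smul]
      abel
    rw [hrew, norm_neg, norm_smul, Real.norm_eq_abs, abs_of_nonneg (by positivity)]
    have h1 : ‖∑ i, ((SignType.sign (a (idx i)) : ℝ) • v (idx i) - A⁻¹ • ∑ j, a j • v j)‖
        ≤ √n * ρ := by
      refine abs_le_of_sq_le_sq' ?_ (by positivity) |>.2
      rw [mul_pow, Real.sq_sqrt hn'.le]
      exact hidx
    calc _ ≤ A / n * (√n * ρ) := by gcongr
      _ = A * ρ / √n := by
        have h2 : √(n : ℝ) ≠ 0 := by positivity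
        have h3 : (n : ℝ) = √n * √n := (Real.mul_self_sqrt hn'.le).symm
        field_simp
        nlinarith

theorem coeFn_sum_smul_toLp {X : Type*} [MeasurableSpace X] {μ : Measure X} {m : ℕ}
    (r : Fin m → X → ℝ) (hr : ∀ j, MemLp (r j) 2 μ) (a : Fin m → ℝ) :
    (∑ j, a j • (hr j).toLp (r j) : Lp ℝ 2 μ) =ᵐ[μ] fun x => ∑ j, a j * r j x := by
  have h1 : ∀ᵐ x ∂μ, ∀ j, (a j • (hr j).toLp (r j) : Lp ℝ 2 μ) x = a j * r j x := by
    rw [ae_all_iff]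
    intro j
    filter_upwards [Lp.coeFn_smul (a j) ((hr j).toLp (r j)), (hr j).coeFn_toLp] with x hx hx'
    rw [hx, Pi.smul_apply, hx', smul_eq_mul]
  filter_upwards [Lp.coeFn_finsetSum Finset.univ fun j => a j • (hr j).toLp (r j), h1] with x hx hx'
  rw [hx, Finset.sum_apply]
  exact Finset.sum_congr rfl fun j _ => hx' j

theorem exists_maurey_L2 {X : Type*} [MeasurableSpace X] {μ : Measure X} {m : ℕ}
    (r : Fin m → X → ℝ) (hr : ∀ j, Measurable (r j)) (a : Fin m → ℝ) {ρ : ℝ} (hρ : 0 ≤ ρ)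
    (hv : ∀ j, eLpNorm (r j) 2 μ ≤ ENNReal.ofReal ρ) {n : ℕ} (hn : 0 < n) :
    ∃ n' ≤ n, ∃ (idx : Fin n' → Fin m) (c : Fin n' → ℝ),
      eLpNorm (fun x => ∑ j, a j * r j x - ∑ i, c i * r (idx i) x) 2 μ
        ≤ ENNReal.ofReal ((∑ j, |a j|) * ρ / √n) := by
  have hm : ∀ j, MemLp (r j) 2 μ := fun j =>
    ⟨(hr j).aestronglyMeasurable, (hv j).trans_lt ENNReal.ofReal_lt_top⟩
  obtain ⟨n', hn', idx, c, h⟩ := exists_maurey (fun j => (hm j).toLp (r j)) a (ρ := ρ) (fun j => by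
    rw [Lp.norm_toLp]
    exact ENNReal.toReal_le_of_le_ofReal hρ (hv j)) hn
  refine ⟨n', hn', idx, c, ?_⟩
  have hae : (fun x => ∑ j, a j * r j x - ∑ i, c i * r (idx i) x) =ᵐ[μ]
      (∑ j, a j • (hm j).toLp (r j) - ∑ i, c i • (hm (idx i)).toLp (r (idx i)) : Lp ℝ 2 μ) := by
    filter_upwards [coeFn_sum_smul_toLp r hm a,
      coeFn_sum_smul_toLp (fun i => r (idx i)) (fun i => hm (idx i)) c,
      Lp.coeFn_sub (∑ j, a j • (hm j).toLp (r j))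
        (∑ i, c i • (hm (idx i)).toLp (r (idx i)))] with x h1 h2 h3
    rw [h3, Pi.sub_apply, h1, h2]
  rw [eLpNorm_congr_ae hae, ← Lp.enorm_def, ← ofReal_norm]
  exact ENNReal.ofReal_le_ofReal h

/-! ### The approximation rate for shallow networks -/

theorem relupow_mul {K : ℕ} {c : ℝ} (hc : 0 < c) (u : ℝ) :
    relupow K (c * u) = c ^ K * relupow K u := by
  unfold relupow
  by_cases h : 0 ≤ u
  · rw [if_pos h, if_pos (by positivity), mul_pow]
  · rw [if_neg h, if_neg (by rw [mul_nonneg_iff_of_pos_left hc]; exact h), mul_zero]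

/-- Every dictionary element is, up to a factor in `[0, 1]`, a ridge function in some chart with
parameter in `[-d, d]ᵈ`: some coordinate of a unit vector is at least `1/d` in absolute value, and
`σ_K` is positively homogeneous. -/
theorem exists_chart {d K : ℕ} (hd : 0 < d) {h : (Fin d → ℝ) → ℝ} (hh : h ∈ dictP d K) :
    ∃ (p : Fin d × Bool) (t : Fin d → ℝ) (lam : ℝ),
      |lam| ≤ 1 ∧ (∀ j, |t j| ≤ d) ∧ h = fun x => lam * ridge K p t x := by
  obtain ⟨ω, b, hω, hb, rfl⟩ := hh
  have hd' : (0 : ℝ) < d := by exact_mod_cast hd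
  have hω1 : ∀ j, |ω j| ≤ 1 := abs_le_one_of_mem_ball hω.le
  obtain ⟨i, -, hi⟩ : ∃ i ∈ (Finset.univ : Finset (Fin d)), (1 : ℝ) / d ≤ ω i ^ 2 := by
    apply Finset.exists_le_of_sum_le
    · exact ⟨⟨0, hd⟩, Finset.mem_univ _⟩
    · rw [hω]
      simp [hd'.ne']
  have hi1 : 1 / (d : ℝ) ≤ |ω i| := by
    refine hi.trans ?_
    rw [← sq_abs]
    nlinarith [abs_nonneg (ω i), hω1 i]
  have hi0 : 0 < |ω i| := lt_of_lt_of_le (by positivity) hi1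
  have hdiv : ∀ u : ℝ, |u| ≤ 1 → abs (u / |ω i|) ≤ d := by
    intro u hu
    rw [abs_div, abs_abs, div_le_iff₀ hi0]
    rw [div_le_iff₀ hd'] at hi1
    linarith
  refine ⟨(i, decide (0 ≤ ω i)), fun j => (if j = i then b else ω j) / |ω i|, |ω i| ^ K,
    ?_, ?_, ?_⟩
  · rw [abs_of_nonneg (by positivity)]
    exact pow_le_one₀ (abs_nonneg _) (hω1 i)
  · intro j
    apply hdiv
    split_ifs
    exacts [hb, hω1 j]
  · funext x
    rw [ridge, ← relupow_mul hi0, chartAffine_eq]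
    congr 1
    rw [mul_add, Finset.mul_sum]
    congr 1
    · refine Finset.sum_congr rfl fun j _ => ?_
      rw [← mul_assoc]
      congr 1
      by_cases hj : j = i
      · subst hj
        rw [if_pos rfl]
        by_cases h0 : 0 ≤ ω j
        · simp [chartSign, h0, abs_of_nonneg h0]
        · simp [chartSign, h0, abs_of_neg (not_le.mp h0)]
      · rw [if_neg hj, if_neg hj]
        field_simp
    · rw [if_pos rfl]
      field_simp

/-- The ridge function rescaled by `1/(d+1)`, which makes its weights and bias bounded by one for
parameters in `[-(d+1), d+1]ᵈ`. -/
noncomputable def scaledRidge {d : ℕ} (K : ℕ) (p : Fin d × Bool) (t x : Fin d → ℝ) : ℝ :=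
  relupow K (chartAffine p t x / (d + 1))

theorem scaledRidge_mem_neurons {d : ℕ} (K : ℕ) (p : Fin d × Bool) (t : Fin d → ℝ)
    (ht : ∀ j, |t j| ≤ d + 1) : scaledRidge K p t ∈ neurons d K := by
  have hd : (0 : ℝ) < d + 1 := by positivity
  refine ⟨fun j => (if j = p.1 then chartSign p.2 else t j) / (d + 1), t p.1 / (d + 1), ?_, ?_, ?_⟩
  · intro j
    rw [abs_div, abs_of_pos hd, div_le_one hd]
    split_ifs
    · rw [abs_chartSign]; linarith [(Nat.cast_nonneg d : (0 : ℝ) ≤ d)]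
    · exact ht j
  · rw [abs_div, abs_of_pos hd, div_le_one hd]
    exact ht _
  · funext x
    rw [scaledRidge, chartAffine_eq, add_div, Finset.sum_div]
    simp only [div_mul_eq_mul_div]

theorem ridge_eq_smul {d : ℕ} (K : ℕ) (p : Fin d × Bool) (t : Fin d → ℝ) :
    ridge K p t = ((d : ℝ) + 1) ^ K • scaledRidge K p t := by
  funext x
  have hd : (0 : ℝ) < d + 1 := by positivity
  rw [Pi.smul_apply, smul_eq_mul, scaledRidge, ← relupow_mul hd, ridge]
  congr 1
  field_simp

/-- The indices of all interpolation nodes: chart, grid cell, and node in the cell. -/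
noncomputable def nodeIndex (d K M : ℕ) : Finset ((Fin d × Bool) × (Fin d → ℤ) × (Fin d → Fin (K + 1))) :=
  Finset.univ ×ˢ Fintype.piFinset (fun _ => Finset.Icc (-(d * M : ℤ)) (d * M)) ×ˢ Finset.univ

theorem card_nodeIndex (d K M : ℕ) :
    (nodeIndex d K M).card = (d * 2) * ((2 * (d * M) + 1) ^ d * (K + 1) ^ d) := by
  have h : ((d : ℤ) * M + 1 + d * M).toNat = 2 * (d * M) + 1 := by
    have : ((d : ℤ) * M + 1 + d * M) = ((2 * (d * M) + 1 : ℕ) : ℤ) := by push_cast; ring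
    rw [this, Int.toNat_natCast]
  simp [nodeIndex, h]

theorem abs_cellNode_le {d K M : ℕ} (hM : 0 < M) {z : Fin d → ℤ}
    (hz : z ∈ Fintype.piFinset (fun _ : Fin d => Finset.Icc (-(d * M : ℤ)) (d * M)))
    (ν : Fin d → Fin (K + 1)) (j : Fin d) : |cellNode K M z ν j| ≤ d + 1 := by
  have hM' : (1 : ℝ) ≤ M := by exact_mod_cast hM
  have h := Finset.mem_Icc.mp (Fintype.mem_piFinset.mp hz j)
  have h1 : -((d : ℝ) * M) ≤ z j := by exact_mod_cast h.1
  have h2 : (z j : ℝ) ≤ d * M := by exact_mod_cast h.2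
  have h3 := node_nonneg K (ν j)
  have h4 := node_le_one K (ν j)
  unfold cellNode
  rw [abs_div, abs_of_pos (by linarith : (0 : ℝ) < M), div_le_iff₀ (by linarith), abs_le]
  constructor <;> nlinarith

theorem floor_mem_cells {d M : ℕ} {t : Fin d → ℝ} (ht : ∀ j, |t j| ≤ d) :
    (fun j => ⌊M * t j⌋) ∈
      Fintype.piFinset (fun _ : Fin d => Finset.Icc (-(d * M : ℤ)) (d * M)) := by
  rw [Fintype.mem_piFinset]
  intro j
  have hM' : (0 : ℝ) ≤ M := Nat.cast_nonneg M
  have h := abs_le.mp (ht j)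
  rw [Finset.mem_Icc]
  constructor
  · rw [Int.le_floor]
    push_cast
    nlinarith
  · have : (⌊M * t j⌋ : ℝ) ≤ d * M := (Int.floor_le _).trans (by nlinarith)
    exact_mod_cast this

/-- Stratified sampling: interpolate on the grid of side `1/M` and apply Maurey's argument to the
residuals.  The interpolants all lie in the span of one common set of nodes, and each sampled
residual contributes a single further neuron. -/
theorem exists_shallow_grid {d K : ℕ} (hd : 0 < d) {Λ : ℝ} (hΛ0 : 0 ≤ Λ)
    (hΛ : ∀ s ∈ Set.Icc (0 : Fin d → ℝ) 1, ∑ ν, |lagr d K ν s| ≤ Λ)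
    {M n : ℕ} (hM : 0 < M) (hn : 0 < n) {m : ℕ} (a : Fin m → ℝ)
    (h : Fin m → (Fin d → ℝ) → ℝ) (hh : ∀ j, h j ∈ dictP d K) :
    ∃ S : Finset ((Fin d → ℝ) → ℝ), (S : Set ((Fin d → ℝ) → ℝ)) ⊆ neurons d K ∧
      S.card ≤ (d * 2) * ((2 * (d * M) + 1) ^ d * (K + 1) ^ d) + n ∧
      ∃ g ∈ Submodule.span ℝ (S : Set ((Fin d → ℝ) → ℝ)),
        eLpNorm ((fun x => ∑ j, a j * h j x) - g) 2 (ballMeasure d) ≤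
          ENNReal.ofReal ((∑ j, |a j|) *
            ((1 + Λ) * (2 * (d / M)) ^ K * √(2 ^ d * (d / M))) / √n) := by
  choose p t lam hlam ht hp using fun j => exists_chart hd (hh j)
  obtain ⟨n', hn', idx, c, hc⟩ := exists_maurey_L2 (fun j => resid K M (p j) (t j))
    (fun j => measurable_resid K M (p j) (t j)) (fun j => a j * lam j)
    (by positivity) (fun j => eLpNorm_resid_le hΛ0 hΛ hM (p j) (t j)) hn
  let S0 : Finset ((Fin d → ℝ) → ℝ) :=
    (nodeIndex d K M).image fun q => scaledRidge K q.1 (cellNode K M q.2.1 q.2.2)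
  let S1 : Finset ((Fin d → ℝ) → ℝ) :=
    Finset.univ.image fun i : Fin n' => scaledRidge K (p (idx i)) (t (idx i))
  let V := Submodule.span ℝ ((S0 ∪ S1 : Finset _) : Set ((Fin d → ℝ) → ℝ))
  have hinterp : ∀ j, ridge K (p j) (t j) - resid K M (p j) (t j) ∈ V := by
    intro j
    have : ridge K (p j) (t j) - resid K M (p j) (t j) =
        ∑ ν, lagr d K ν (fun l => Int.fract (M * t j l)) •
          ridge K (p j) (cellNode K M (fun l => ⌊M * t j l⌋) ν) := by
      funext x
      simp [resid, Finset.sum_apply]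
    rw [this]
    refine Submodule.sum_mem _ fun ν _ => Submodule.smul_mem _ _ ?_
    rw [ridge_eq_smul]
    refine Submodule.smul_mem _ _ (Submodule.subset_span ?_)
    rw [Finset.mem_coe, Finset.mem_union]
    left
    refine Finset.mem_image.mpr ⟨(p j, (fun l => ⌊M * t j l⌋), ν), ?_, rfl⟩
    simp only [nodeIndex, Finset.mem_product, Finset.mem_univ, true_and, and_true]
    exact floor_mem_cells (ht j)
  have hresid : ∀ i, resid K M (p (idx i)) (t (idx i)) ∈ V := by
    intro i
    have h1 : ridge K (p (idx i)) (t (idx i)) ∈ V := by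
      rw [ridge_eq_smul]
      refine Submodule.smul_mem _ _ (Submodule.subset_span ?_)
      rw [Finset.mem_coe, Finset.mem_union]
      right
      exact Finset.mem_image.mpr ⟨i, Finset.mem_univ _, rfl⟩
    simpa using V.sub_mem h1 (hinterp (idx i))
  refine ⟨S0 ∪ S1, ?_, ?_,
    ∑ j, (a j * lam j) • (ridge K (p j) (t j) - resid K M (p j) (t j))
      + ∑ i, c i • resid K M (p (idx i)) (t (idx i)), ?_, ?_⟩
  · intro f hf
    rw [Finset.mem_coe, Finset.mem_union] at hf
    rcases hf with hf | hf
    · obtain ⟨q, hq, rfl⟩ := Finset.mem_image.mp hf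
      simp only [nodeIndex, Finset.mem_product, Finset.mem_univ, true_and, and_true] at hq
      exact scaledRidge_mem_neurons K _ _ fun j => abs_cellNode_le hM hq _ j
    · obtain ⟨i, -, rfl⟩ := Finset.mem_image.mp hf
      exact scaledRidge_mem_neurons K _ _ fun j => (ht _ j).trans (by linarith)
  · refine (Finset.card_union_le _ _).trans (add_le_add ?_ ?_)
    · exact Finset.card_image_le.trans (card_nodeIndex d K M).le
    · exact Finset.card_image_le.trans (by simpa using hn')
  · exact V.add_mem (Submodule.sum_mem _ fun j _ => Submodule.smul_mem _ _ (hinterp j))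
      (Submodule.sum_mem _ fun i _ => Submodule.smul_mem _ _ (hresid i))
  · have hfun : ((fun x => ∑ j, a j * h j x) -
        (∑ j, (a j * lam j) • (ridge K (p j) (t j) - resid K M (p j) (t j))
          + ∑ i, c i • resid K M (p (idx i)) (t (idx i)))) =
        fun x => ∑ j, a j * lam j * resid K M (p j) (t j) x
          - ∑ i, c i * resid K M (p (idx i)) (t (idx i)) x := by
      funext x
      simp only [Pi.sub_apply, Pi.add_apply, Finset.sum_apply, Pi.smul_apply, smul_eq_mul, mul_sub,
        Finset.sum_sub_distrib]
      have : ∑ j, a j * h j x = ∑ j, a j * lam j * ridge K (p j) (t j) x :=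
        Finset.sum_congr rfl fun j _ => by
          rw [show h j x = lam j * ridge K (p j) (t j) x from congrFun (hp j) x]; ring
      rw [this]
      ring
    rw [hfun]
    refine hc.trans (ENNReal.ofReal_le_ofReal ?_)
    have hsum : ∑ j, |a j * lam j| ≤ ∑ j, |a j| := Finset.sum_le_sum fun j _ => by
      rw [abs_mul]
      exact mul_le_of_le_one_right (abs_nonneg _) (hlam j)
    exact div_le_div_of_nonneg_right (mul_le_mul_of_nonneg_right hsum (by positivity))
      (by positivity)

/-- For `n ≥ 1` there is a grid size comparable to `n^{1/d}`. -/
theorem exists_grid_size {d n : ℕ} (hd : 0 < d) (hn : 0 < n) :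
    ∃ M : ℕ, 0 < M ∧ M ^ d ≤ n ∧ 1 / (M : ℝ) ≤ 2 * (n : ℝ) ^ (-(1 / (d : ℝ))) := by
  have hn1 : (1 : ℝ) ≤ n := by exact_mod_cast hn
  set y : ℝ := (n : ℝ) ^ (1 / (d : ℝ)) with hy
  have hy1 : 1 ≤ y := Real.one_le_rpow hn1 (by positivity)
  have hM : 0 < ⌊y⌋₊ := Nat.floor_pos.mpr hy1
  refine ⟨⌊y⌋₊, hM, ?_, ?_⟩
  · have h : (⌊y⌋₊ : ℝ) ^ d ≤ y ^ d :=
      pow_le_pow_left₀ (Nat.cast_nonneg _) (Nat.floor_le (by linarith)) d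
    have h2 : y ^ d = n := by
      rw [hy, one_div]
      exact Real.rpow_inv_natCast_pow (by linarith) hd.ne'
    rw [h2] at h
    exact_mod_cast h
  · rw [Real.rpow_neg (by linarith), ← hy, ← div_eq_mul_inv, div_le_div_iff₀ (by exact_mod_cast hM)
      (by linarith)]
    have h1 := Nat.lt_floor_add_one y
    have h2 : (1 : ℝ) ≤ ⌊y⌋₊ := by exact_mod_cast hM
    linarith

/-- Shallow `σ_K` networks with bounded inner weights attain the rate
`n^{-1/2-(2K+1)/(2d)}` on the variation space (Siegel–Xu). -/
theorem exists_shallow_rate (d K : ℕ) (hd : 0 < d) :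
    ∃ (C : ℝ) (Q : ℕ), 0 ≤ C ∧ ∀ n : ℕ, 0 < n → ∀ (m : ℕ) (a : Fin m → ℝ)
      (h : Fin m → (Fin d → ℝ) → ℝ), (∀ j, h j ∈ dictP d K) →
      ∃ S : Finset ((Fin d → ℝ) → ℝ), (S : Set ((Fin d → ℝ) → ℝ)) ⊆ neurons d K ∧
        S.card ≤ Q * n ∧ ∃ g ∈ Submodule.span ℝ (S : Set ((Fin d → ℝ) → ℝ)),
          eLpNorm ((fun x => ∑ j, a j * h j x) - g) 2 (ballMeasure d) ≤
            ENNReal.ofReal (C * (∑ j, |a j|) *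
              (n : ℝ) ^ (-(1 / 2 : ℝ) - (2 * (K : ℝ) + 1) / (2 * (d : ℝ)))) := by
  obtain ⟨Λ, hΛ0, hΛ⟩ := exists_lebesgue_bound d K
  refine ⟨(1 + Λ) * (4 * d) ^ K * √(2 ^ d * (2 * d)),
    (d * 2) * ((3 * d) ^ d * (K + 1) ^ d) + 1, by positivity, fun n hn m a h hh => ?_⟩
  obtain ⟨M, hM, hMn, hMy⟩ := exists_grid_size hd hn
  obtain ⟨S, hS, hcard, g, hg, herr⟩ := exists_shallow_grid hd hΛ0 hΛ hM hn a h hh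
  refine ⟨S, hS, hcard.trans ?_, g, hg, herr.trans (ENNReal.ofReal_le_ofReal ?_)⟩
  · rw [add_mul, one_mul]
    refine Nat.add_le_add_right ?_ n
    have h1 : 2 * (d * M) + 1 ≤ 3 * d * M := by nlinarith [Nat.mul_pos hd hM]
    calc (d * 2) * ((2 * (d * M) + 1) ^ d * (K + 1) ^ d)
        ≤ (d * 2) * ((3 * d * M) ^ d * (K + 1) ^ d) := by gcongr
      _ = (d * 2) * ((3 * d) ^ d * (K + 1) ^ d) * M ^ d := by rw [mul_pow (3 * d)]; ring
      _ ≤ _ := by gcongr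
  · have hn0 : (0 : ℝ) < n := by exact_mod_cast hn
    have hd0 : (0 : ℝ) < d := by exact_mod_cast hd
    set y : ℝ := (n : ℝ) ^ (-(1 / (d : ℝ))) with hy
    have hy0 : 0 < y := Real.rpow_pos_of_pos hn0 _
    have hdM : (d : ℝ) / M ≤ 2 * d * y := by
      calc (d : ℝ) / M = d * (1 / M) := by ring
        _ ≤ d * (2 * y) := by gcongr
        _ = _ := by ring
    have hpow : y ^ K * √y / √n
        = (n : ℝ) ^ (-(1 / 2 : ℝ) - (2 * (K : ℝ) + 1) / (2 * (d : ℝ))) := by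
      rw [hy, Real.sqrt_eq_rpow, Real.sqrt_eq_rpow, ← Real.rpow_natCast, ← Real.rpow_mul hn0.le,
        ← Real.rpow_mul hn0.le, ← Real.rpow_add hn0, ← Real.rpow_sub hn0]
      congr 1
      field_simp
      ring
    rw [← hpow]
    have hA : 0 ≤ ∑ j, |a j| := Finset.sum_nonneg fun _ _ => abs_nonneg _
    calc (∑ j, |a j|) * ((1 + Λ) * (2 * (d / M)) ^ K * √(2 ^ d * (d / M))) / √n
        ≤ (∑ j, |a j|) * ((1 + Λ) * (2 * (2 * d * y)) ^ K * √(2 ^ d * (2 * d * y))) / √n := by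
          gcongr
      _ = _ := by
          rw [show (2 : ℝ) ^ d * (2 * d * y) = 2 ^ d * (2 * d) * y by ring,
            Real.sqrt_mul (by positivity), show 2 * (2 * (d : ℝ) * y) = 4 * d * y by ring, mul_pow _ y]
          ring

/-! ### Passing to the closure -/

theorem measurable_deepLayers (k d W : ℕ) (A1 : Matrix (Fin W) (Fin d) ℝ) (b1 : Fin W → ℝ)
    (A : ℕ → Matrix (Fin W) (Fin W) ℝ) (b : ℕ → Fin W → ℝ) (m : ℕ) (j : Fin W) :
    Measurable fun x => deepLayers k d W A1 b1 A b m x j := by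
  induction m generalizing j with
  | zero => exact (measurable_relupow k).comp (by fun_prop)
  | succ m ih =>
    exact (measurable_relupow k).comp
      ((Finset.measurable_fun_sum _ fun i _ => (ih i).const_mul _).add_const _)

theorem measurable_of_mem_deepClass {k d W L : ℕ} {B : ℝ} {g : (Fin d → ℝ) → ℝ}
    (hg : g ∈ DeepReLUkClass k d W L B) : Measurable g := by
  obtain ⟨A1, b1, A, b, c, -, -, -, rfl⟩ := hg
  exact Finset.measurable_fun_sum _ fun j _ =>
    (measurable_deepLayers k d W A1 b1 A b _ j).const_mul _

theorem measurable_of_mem_dictP {d K : ℕ} {h : (Fin d → ℝ) → ℝ} (hh : h ∈ dictP d K) :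
    Measurable h := by
  obtain ⟨ω, b, -, -, rfl⟩ := hh
  exact (measurable_relupow K).comp (by fun_prop)

theorem abs_le_of_mem_dictP {d K : ℕ} {h : (Fin d → ℝ) → ℝ} (hh : h ∈ dictP d K)
    {x : Fin d → ℝ} (hx : ∑ i, (x i) ^ 2 ≤ 1) : |h x| ≤ (d + 1) ^ K := by
  obtain ⟨ω, b, hω, hb, rfl⟩ := hh
  apply abs_relupow_le
  refine (abs_add_le _ _).trans (add_le_add ?_ hb)
  calc |∑ i, ω i * x i| ≤ ∑ i, |ω i * x i| := Finset.abs_sum_le_sum_abs _ _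
    _ ≤ ∑ _i : Fin d, (1 : ℝ) := Finset.sum_le_sum fun i _ => by
        rw [abs_mul]
        exact mul_le_one₀ (abs_le_one_of_mem_ball hω.le i) (abs_nonneg _)
          (abs_le_one_of_mem_ball hx i)
    _ = d := by simp

theorem eLpNorm_combination_le (d K : ℕ) :
    ∃ C : ℝ, 0 ≤ C ∧ ∀ (m : ℕ) (a : Fin m → ℝ) (h : Fin m → (Fin d → ℝ) → ℝ),
      (∀ j, h j ∈ dictP d K) →
      eLpNorm (fun x => ∑ j, a j * h j x) 2 (ballMeasure d)
        ≤ ENNReal.ofReal (C * ∑ j, |a j|) := by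
  refine ⟨((ballMeasure d) Set.univ ^ ((2 : ℝ≥0∞).toReal⁻¹)).toReal * (d + 1) ^ K,
    by positivity, fun m a h hh => ?_⟩
  have hb : ∀ᵐ x ∂(ballMeasure d), ‖∑ j, a j * h j x‖ ≤ (d + 1) ^ K * ∑ j, |a j| := by
    refine ae_restrict_of_forall_mem (measurableSet_euclBall d) fun x hx => ?_
    rw [Real.norm_eq_abs, Finset.mul_sum]
    refine (Finset.abs_sum_le_sum_abs _ _).trans (Finset.sum_le_sum fun j _ => ?_)
    rw [abs_mul, mul_comm]
    exact mul_le_mul_of_nonneg_right (abs_le_of_mem_dictP (hh j) hx) (abs_nonneg _)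
  refine (eLpNorm_le_of_ae_bound hb).trans (le_of_eq ?_)
  rw [mul_assoc, ENNReal.ofReal_mul ENNReal.toReal_nonneg, ENNReal.ofReal_toReal]
  exact ENNReal.rpow_ne_top_of_nonneg (by positivity) (measure_ne_top _ _)

/-- A quasi-triangle inequality in which the first summand need not be measurable.  It holds
because the lower integral is additive as soon as one summand is measurable. -/
theorem eLpNorm_add_le_two_mul {X : Type*} [MeasurableSpace X] {μ : Measure X} (u v : X → ℝ)
    (hv : Measurable v) : eLpNorm (u + v) 2 μ ≤ 2 * (eLpNorm u 2 μ + eLpNorm v 2 μ) := by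
  have hsq : ∀ w : X → ℝ, eLpNorm w 2 μ ^ 2 = ∫⁻ x, ‖w x‖ₑ ^ 2 ∂μ := by
    intro w
    have := eLpNorm_nnreal_pow_eq_lintegral (μ := μ) (f := w) (p := 2) (by norm_num)
    simpa using this
  rw [← ENNReal.pow_le_pow_left_iff (two_ne_zero), hsq]
  have hpt : ∀ x, ‖(u + v) x‖ₑ ^ 2 ≤ 2 * ‖u x‖ₑ ^ 2 + 2 * ‖v x‖ₑ ^ 2 := by
    intro x
    simp only [Pi.add_apply, Real.enorm_eq_ofReal_abs]
    rw [← ENNReal.ofReal_pow (abs_nonneg _), ← ENNReal.ofReal_pow (abs_nonneg _),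
      ← ENNReal.ofReal_pow (abs_nonneg _), ← ENNReal.ofReal_ofNat, ← ENNReal.ofReal_mul (by norm_num),
      ← ENNReal.ofReal_mul (by norm_num), ← ENNReal.ofReal_add (by positivity) (by positivity)]
    apply ENNReal.ofReal_le_ofReal
    simp only [sq_abs]
    nlinarith [sq_nonneg (u x - v x)]
  calc ∫⁻ x, ‖(u + v) x‖ₑ ^ 2 ∂μ ≤ ∫⁻ x, (2 * ‖u x‖ₑ ^ 2 + 2 * ‖v x‖ₑ ^ 2) ∂μ :=
        lintegral_mono hpt
    _ = 2 * eLpNorm u 2 μ ^ 2 + 2 * eLpNorm v 2 μ ^ 2 := by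
        rw [lintegral_add_right _ ((hv.enorm.pow_const 2).const_mul 2),
          lintegral_const_mul' _ _ (by norm_num), lintegral_const_mul' _ _ (by norm_num), hsq, hsq]
    _ ≤ (2 * (eLpNorm u 2 μ + eLpNorm v 2 μ)) ^ 2 := by
        have : (2 * (eLpNorm u 2 μ + eLpNorm v 2 μ)) ^ 2
          = (2 * eLpNorm u 2 μ ^ 2 + 2 * eLpNorm v 2 μ ^ 2) + (2 * eLpNorm u 2 μ ^ 2
            + 2 * eLpNorm v 2 μ ^ 2 + 8 * eLpNorm u 2 μ * eLpNorm v 2 μ) := by ring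
        rw [this]
        exact le_self_add

/-- The deep approximation rate for finite combinations of dictionary elements.  Below a threshold
for `n` depending only on `d`, `k`, `ℓ` the zero network is used. -/
theorem exists_deep_rate (d k L ℓ : ℕ) (hd : 0 < d) (hk : 1 ≤ k) (hℓ1 : 1 ≤ ℓ) (hℓL : ℓ ≤ L)
    (B : ℝ) (hB : 1 ≤ B) :
    ∃ C : ℝ, 0 < C ∧ ∀ n : ℕ, 0 < n → ∀ (m : ℕ) (a : Fin m → ℝ)
      (h : Fin m → (Fin d → ℝ) → ℝ), (∀ j, h j ∈ dictP d (k ^ ℓ)) →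
      ∃ g ∈ DeepReLUkClass k d (2 * (k + 1) * n) L B,
        eLpNorm ((fun x => ∑ j, a j * h j x) - g) 2 (ballMeasure d) ≤
          ENNReal.ofReal (C * (∑ j, |a j|) *
            (n : ℝ) ^ (-(1 / 2 : ℝ) - (2 * (k : ℝ) ^ ℓ + 1) / (2 * (d : ℝ)))) := by
  obtain ⟨D0, hD0⟩ := exists_mem_deepClass k d L ℓ hk hℓ1 hℓL B hB
  obtain ⟨C1, Q, hC1, hQ⟩ := exists_shallow_rate d (k ^ ℓ) hd
  obtain ⟨C2, hC2, hzero⟩ := eLpNorm_combination_le d (k ^ ℓ)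
  push_cast at hQ
  set α : ℝ := -(1 / 2 : ℝ) - (2 * (k : ℝ) ^ ℓ + 1) / (2 * (d : ℝ)) with hα
  have hα0 : α ≤ 0 := by
    have : 0 ≤ (2 * (k : ℝ) ^ ℓ + 1) / (2 * (d : ℝ)) := by positivity
    linarith
  set P : ℕ := Q + D0 + 1 with hP
  have hP0 : (0 : ℝ) < P := by positivity
  refine ⟨(C1 + C2 + 1) * ((2 * P : ℝ) ^ α)⁻¹, by positivity, fun n hn m a h hh => ?_⟩
  have hn0 : (0 : ℝ) < n := by exact_mod_cast hn
  have hA : 0 ≤ ∑ j, |a j| := Finset.sum_nonneg fun _ _ => abs_nonneg _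
  have hW : n ≤ 2 * (k + 1) * n := Nat.le_mul_of_pos_left n (by positivity)
  have hpos : 0 < (2 * P : ℝ) ^ α := by positivity
  have hscale : ∀ q : ℝ, 0 < q → (n : ℝ) ≤ 2 * P * q →
      q ^ α ≤ ((2 * P : ℝ) ^ α)⁻¹ * (n : ℝ) ^ α := by
    intro q hq hnq
    have h1 := Real.rpow_le_rpow_of_nonpos hn0 hnq hα0
    rw [Real.mul_rpow (by positivity) hq.le] at h1
    rw [inv_mul_eq_div, le_div_iff₀ hpos, mul_comm]
    exact h1
  rcases lt_or_ge n P with hnP | hnP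
  · refine ⟨0, zero_mem_deepClass _ _ _ _ _ (zero_le_one.trans hB), ?_⟩
    rw [sub_zero]
    refine (hzero m a h hh).trans (ENNReal.ofReal_le_ofReal ?_)
    have h1 := hscale 1 one_pos (by
      have : (n : ℝ) ≤ P := by exact_mod_cast hnP.le
      linarith)
    rw [Real.one_rpow] at h1
    calc C2 * ∑ j, |a j| ≤ (C1 + C2 + 1) * (∑ j, |a j|) * 1 := by
          rw [mul_one]; gcongr; linarith
      _ ≤ (C1 + C2 + 1) * (∑ j, |a j|) * (((2 * P : ℝ) ^ α)⁻¹ * (n : ℝ) ^ α) := by gcongr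
      _ = _ := by ring
  · have hq : 0 < n / P := Nat.div_pos hnP (by omega)
    obtain ⟨S, hS, hcard, g, hg, herr⟩ := hQ (n / P) hq m a h hh
    have hcardW : S.card ≤ 2 * (k + 1) * n :=
      hcard.trans (((Nat.mul_le_mul_right _ (by omega : Q ≤ P)).trans
        (Nat.mul_div_le n P)).trans hW)
    refine ⟨g, hD0 _ ((by omega : D0 ≤ n).trans hW) S hS hcardW g hg,
      herr.trans (ENNReal.ofReal_le_ofReal ?_)⟩
    have h1 := hscale ((n / P : ℕ) : ℝ) (by exact_mod_cast hq) (by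
      have h2 := Nat.div_add_mod n P
      have h3 := Nat.mod_lt n (by omega : P > 0)
      have h4 : P ≤ P * (n / P) := Nat.le_mul_of_pos_right P hq
      have : n ≤ 2 * P * (n / P) := by nlinarith
      exact_mod_cast this)
    calc C1 * (∑ j, |a j|) * ((n / P : ℕ) : ℝ) ^ α
        ≤ (C1 + C2 + 1) * (∑ j, |a j|) * (((2 * P : ℝ) ^ α)⁻¹ * (n : ℝ) ^ α) := by
          gcongr
          linarith
      _ = _ := by ring

/-- for `k ≥ 2`, depth `L`, and any `K = k^ℓ` with `1 ≤ ℓ ≤ L`, there is a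
constant `C > 0` independent of `n` such that for every `n`, every function `f` of variation
norm at most `R` in `𝒦₁(ℙ_{k^ℓ}^d)` is approximated in `L²(𝔹ᵈ)` by the deep ReLU^k class of
depth `L`, widths `2(k+1)n`, and weight bound `B = (k/2+1)⁴`, with error at most
`C R n^{−1/2 − (2K+1)/(2d)}`. -/
theorem deep_relupow_adaptive_variation (d k L : ℕ)
    (hd : 0 < d) (hk : 2 ≤ k) (hL : 0 < L)
    (ℓ : ℕ) (hℓ1 : 1 ≤ ℓ) (hℓL : ℓ ≤ L) :
    ∃ C : ℝ, 0 < C ∧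
      ∀ n : ℕ, 0 < n →
        ∀ (f : (Fin d → ℝ) → ℝ) (R : ℝ), memVariationBall d (k ^ ℓ) R f →
          (⨅ g ∈ DeepReLUkClass k d (2 * (k + 1) * n) L (((k : ℝ) / 2 + 1) ^ 4),
              eLpNorm (f - g) 2
                (volume.restrict {x : Fin d → ℝ | ∑ i, (x i) ^ 2 ≤ 1}))
            ≤ ENNReal.ofReal (C * R *
                (n : ℝ) ^ (-(1 / 2 : ℝ) - (2 * (k : ℝ) ^ ℓ + 1) / (2 * (d : ℝ)))) := by
  have hB : (1 : ℝ) ≤ ((k : ℝ) / 2 + 1) ^ 4 := by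
    apply one_le_pow₀
    have : (0 : ℝ) ≤ (k : ℝ) / 2 := by positivity
    linarith
  obtain ⟨C, hC, hdeep⟩ := exists_deep_rate d k L ℓ hd (by omega) hℓ1 hℓL _ hB
  refine ⟨2 * C, by positivity, fun n hn f R hf => ?_⟩
  set y : ℝ := (n : ℝ) ^ (-(1 / 2 : ℝ) - (2 * (k : ℝ) ^ ℓ + 1) / (2 * (d : ℝ))) with hy
  have hy0 : 0 ≤ y := by positivity
  apply ENNReal.le_of_forall_pos_le_add
  intro ε hε _
  -- The quasi-triangle inequality doubles the error of the finite combination, hence `ε / 2`.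
  obtain ⟨m, a, h, hh, haR, herr⟩ := hf ((ε : ℝ) / 2) (by positivity)
  obtain ⟨g, hg, hgerr⟩ := hdeep n hn m a h hh
  refine (iInf₂_le g hg).trans ?_
  have hsplit : f - g = (f - fun x => ∑ j, a j * h j x) + ((fun x => ∑ j, a j * h j x) - g) := by
    abel
  have hmeas : Measurable ((fun x => ∑ j, a j * h j x) - g) :=
    (Finset.measurable_fun_sum _ fun j _ => (measurable_of_mem_dictP (hh j)).const_mul _).sub
      (measurable_of_mem_deepClass hg)
  rw [hsplit]
  refine (eLpNorm_add_le_two_mul _ _ hmeas).trans ?_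
  have hR : 0 ≤ R := (Finset.sum_nonneg fun _ _ => abs_nonneg _).trans haR
  calc _ ≤ 2 * (ENNReal.ofReal ((ε : ℝ) / 2) + ENNReal.ofReal (C * R * y)) := by
        gcongr
        refine hgerr.trans (ENNReal.ofReal_le_ofReal ?_)
        gcongr
    _ = ENNReal.ofReal (2 * C * R * y) + ε := by
        rw [← ENNReal.ofReal_add (by positivity) (by positivity), ← ENNReal.ofReal_ofNat,
          ← ENNReal.ofReal_mul (by norm_num), ← ENNReal.ofReal_coe_nnreal (p := ε),
          ← ENNReal.ofReal_add (by positivity) (by positivity)]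
        congr 1
        ring
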